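/- arXiv:1411.1395 — 7 statements merged into one kernel-verified Lean document; each statement's English description precedes it below -/
import Mathlib

section
/- For every integer r ≥ 1, if the voxel (i,j,k) ∈ ℤ³ is a hemisphere absentee of H(r), then its projection (i,k) onto the zx-plane is a disc absentee of radius r, i.e., (i,k) ∈ A(r). -/
/-!
A hemisphere absentee `(i, j, k)` projects to a pixel lying strictly between two consecutive
circles `C(a-1)` and `C(a)`, where `(a, j) ∈ C(r)` forces `a ≤ r`.

*Not covered.* For a fixed pixel the deviation `circVal s p` is antitone in `s ≥ 0`
(`circVal_anti`), so the pixel stays exterior to `C(s)` for `s ≤ a - 1` and interior for `s ≥ a`.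

*In the disc.* Interiority gives `(2M+1)² + 4m² ≤ 4r²`, where `M` and `m` are the larger and the
smaller of `|i|` and `|k|`. Row `k` then contains a pixel `(c, k)` of `C(r)` with `c ≥ |i|`
(`exists_mem_digCircle`): either `c` is `√(r² - k²)` rounded to the nearest integer, when this is
at least `|k|`, or `c` is the largest integer with `√(r² - c²) > |k| - 1/2`. In the latter case
`c < |k|`, where the circle has slope less than one, so that also `√(r² - c²) < |k| + 1/2`.
Taking `± c` according to the sign of `i` gives the disc witness.
-/

/-- The signed radial deviation of a pixel from the real circle of radius `a`. -/
noncomputable def circVal (a : ℤ) (p : ℤ × ℤ) : ℝ :=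
  ((max |p.1| |p.2| : ℤ) : ℝ) - Real.sqrt ((a : ℝ) ^ 2 - ((min |p.1| |p.2| : ℤ) : ℝ) ^ 2)

/-- The digital circle of radius `a` centered at the origin. -/
noncomputable def digCircle (a : ℤ) : Set (ℤ × ℤ) := {p | |circVal a p| < 1 / 2}

/-- A pixel interior to the digital circle of radius `a`. -/
noncomputable def interiorC (a : ℤ) (p : ℤ × ℤ) : Prop := circVal a p ≤ -(1 / 2)

/-- A pixel exterior to the digital circle of radius `a`. -/
noncomputable def exteriorC (a : ℤ) (p : ℤ × ℤ) : Prop := (1 / 2 : ℝ) ≤ circVal a p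

/-- The digital disc of radius `r`. -/
noncomputable def digDisc (r : ℤ) : Set (ℤ × ℤ) :=
  {p | ∃ ic : ℤ, (ic, p.2) ∈ digCircle r ∧ 0 ≤ p.1 * ic ∧ p.1 * ic ≤ ic ^ 2}

/-- The set of disc absentees: pixels of the disc not covered by any circle of radius `0,…,r`. -/
noncomputable def discAbs (r : ℤ) : Set (ℤ × ℤ) :=
  digDisc r \ ⋃ s ∈ Finset.Icc (0 : ℤ) r, digCircle s

/-- The first-quadrant generatrix (Octants 1 and 2) of the digital circle of radius `r`. -/
noncomputable def gen12 (r : ℤ) : Set (ℤ × ℤ) := {p | p ∈ digCircle r ∧ 0 ≤ p.1 ∧ 0 ≤ p.2}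

/-- The hemisphere of revolution of radius `r`; a voxel is `(x, j, z)`. -/
noncomputable def hemi (r : ℤ) : Set (ℤ × ℤ × ℤ) :=
  {v | ∃ a : ℤ, 0 ≤ a ∧ (a, v.2.1) ∈ gen12 r ∧ (v.1, v.2.2) ∈ digCircle a}

/-- The hemisphere absentees of `hemi r`. -/
noncomputable def hemiAbs (r : ℤ) : Set (ℤ × ℤ × ℤ) :=
  {v | ∃ a j' : ℤ, 1 ≤ a ∧ (j' = v.2.1 ∨ j' = v.2.1 + 1) ∧
    (a, v.2.1) ∈ gen12 r ∧ (a - 1, j') ∈ gen12 r ∧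
    interiorC a (v.1, v.2.2) ∧ exteriorC (a - 1) (v.1, v.2.2)}

lemma circVal_anti {s t : ℤ} (hs : 0 ≤ s) (hst : s ≤ t) (p : ℤ × ℤ) :
    circVal t p ≤ circVal s p := by
  unfold circVal
  have h1 : (0 : ℝ) ≤ s := by exact_mod_cast hs
  have h2 : (s : ℝ) ≤ t := by exact_mod_cast hst
  have : √((s : ℝ) ^ 2 - ((min |p.1| |p.2| : ℤ) : ℝ) ^ 2) ≤
      √((t : ℝ) ^ 2 - ((min |p.1| |p.2| : ℤ) : ℝ) ^ 2) := by
    apply Real.sqrt_le_sqrt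
    gcongr
  linarith

/-- Square-root-free criterion for a pixel to lie on the digital circle. -/
lemma mem_digCircle_of {r M m : ℤ} {p : ℤ × ℤ} (hM : max |p.1| |p.2| = M)
    (hm : min |p.1| |p.2| = m) (h1 : 1 ≤ M) (hlo : (2 * M - 1) ^ 2 + 4 * m ^ 2 < 4 * r ^ 2)
    (hhi : 4 * r ^ 2 < (2 * M + 1) ^ 2 + 4 * m ^ 2) : p ∈ digCircle r := by
  show |circVal r p| < 1 / 2
  unfold circVal
  rw [hM, hm]
  have h1' : (1 : ℝ) ≤ M := by exact_mod_cast h1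
  have hlo' : (2 * (M : ℝ) - 1) ^ 2 + 4 * (m : ℝ) ^ 2 < 4 * (r : ℝ) ^ 2 := by exact_mod_cast hlo
  have hhi' : 4 * (r : ℝ) ^ 2 < (2 * (M : ℝ) + 1) ^ 2 + 4 * (m : ℝ) ^ 2 := by exact_mod_cast hhi
  have l : (M : ℝ) - 1 / 2 < √((r : ℝ) ^ 2 - (m : ℝ) ^ 2) := by
    apply Real.lt_sqrt_of_sq_lt
    nlinarith
  have u : √((r : ℝ) ^ 2 - (m : ℝ) ^ 2) < (M : ℝ) + 1 / 2 := by
    rw [Real.sqrt_lt' (by linarith)]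
    nlinarith
  rw [abs_lt]
  constructor <;> linarith

/-- Rounding does not push a point of the digital circle beyond the integer radius. -/
lemma le_radius_of_mem {r : ℤ} (hr : 0 ≤ r) {p : ℤ × ℤ} (h : p ∈ digCircle r) : p.1 ≤ r := by
  have h' : |circVal r p| < 1 / 2 := h
  have h2 := (abs_lt.1 h').2
  unfold circVal at h2
  have hr' : (0 : ℝ) ≤ r := by exact_mod_cast hr
  have h3 : √((r : ℝ) ^ 2 - ((min |p.1| |p.2| : ℤ) : ℝ) ^ 2) ≤ r := by
    rw [Real.sqrt_le_left hr']
    nlinarith [sq_nonneg ((min |p.1| |p.2| : ℤ) : ℝ)]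
  have h4 : ((max |p.1| |p.2| : ℤ) : ℝ) < ((r + 1 : ℤ) : ℝ) := by push_cast at *; linarith
  have h5 : max |p.1| |p.2| < r + 1 := by exact_mod_cast h4
  have := le_max_left |p.1| |p.2|
  have := le_abs_self p.1
  omega

lemma sq_le_of_interior {a : ℤ} {p : ℤ × ℤ} (h : interiorC a p) :
    (2 * max |p.1| |p.2| + 1) ^ 2 + 4 * (min |p.1| |p.2|) ^ 2 ≤ 4 * a ^ 2 := by
  unfold interiorC circVal at h
  have hM : (0 : ℤ) ≤ max |p.1| |p.2| := (abs_nonneg p.1).trans (le_max_left _ _)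
  generalize max |p.1| |p.2| = M at *
  generalize min |p.1| |p.2| = m at *
  have hM' : (0 : ℝ) ≤ M := by exact_mod_cast hM
  have h1 : (M : ℝ) + 1 / 2 ≤ √((a : ℝ) ^ 2 - (m : ℝ) ^ 2) := by linarith
  rw [Real.le_sqrt' (by linarith)] at h1
  have : (2 * (M : ℝ) + 1) ^ 2 + 4 * (m : ℝ) ^ 2 ≤ 4 * (a : ℝ) ^ 2 := by nlinarith
  exact_mod_cast this

/-- A row through a pixel well inside the circle of radius `r` meets the digital circle at or
beyond that pixel. -/
lemma exists_mem_digCircle {r I K : ℤ} (hr : 1 ≤ r) (hI : 0 ≤ I) (hK : 0 ≤ K)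
    (h : (2 * max I K + 1) ^ 2 + 4 * (min I K) ^ 2 ≤ 4 * r ^ 2) :
    ∃ c : ℤ, I ≤ c ∧ ∀ p : ℤ × ℤ, |p.1| = c → |p.2| = K → p ∈ digCircle r := by
  have hI1 : (2 * I - 1) ^ 2 + 4 * K ^ 2 < 4 * r ^ 2 := by
    rcases le_total I K with hh | hh
    · rw [max_eq_right hh, min_eq_left hh] at h
      rcases hK.eq_or_lt with h0 | h0
      · have : I = 0 := by omega
        subst this
        subst h0
        nlinarith
      · nlinarith
    · rw [max_eq_left hh, min_eq_right hh] at h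
      rcases hI.eq_or_lt with h0 | h0
      · have : K = 0 := by omega
        subst this
        subst h0
        nlinarith
      · nlinarith
  -- `c` is `√(r² - K²)` rounded to the nearest integer
  obtain ⟨c, hc, hmax⟩ := Int.exists_greatest_of_bdd
    (P := fun c : ℤ => (2 * c - 1) ^ 2 + 4 * K ^ 2 < 4 * r ^ 2)
    ⟨r + 1, fun z hz => by by_contra! hlt; nlinarith [sq_nonneg K]⟩ ⟨I, hI1⟩
  have hIc : I ≤ c := hmax I hI1
  have hnext : 4 * r ^ 2 ≤ (2 * c + 1) ^ 2 + 4 * K ^ 2 := by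
    by_contra! hlt
    have := hmax (c + 1) (by ring_nf at hlt ⊢; exact hlt)
    omega
  -- equality is impossible: the right-hand side is odd
  have hhi : 4 * r ^ 2 < (2 * c + 1) ^ 2 + 4 * K ^ 2 := by
    refine lt_of_le_of_ne hnext fun he => ?_
    ring_nf at he
    omega
  by_cases hcK : K ≤ c
  · refine ⟨c, hIc, fun p h1 h2 => mem_digCircle_of (M := c) (m := K) ?_ ?_ ?_ hc hhi⟩
    · rw [h1, h2, max_eq_left hcK]
    · rw [h1, h2, min_eq_right hcK]
    · by_contra! hlt
      have hc0 : c = 0 := by omega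
      have hK0 : K = 0 := by omega
      subst hc0
      subst hK0
      nlinarith
  push Not at hcK
  have hKn : 4 * r ^ 2 ≤ (2 * K - 1) ^ 2 + 4 * K ^ 2 := by
    by_contra! hlt
    have := hmax K hlt
    omega
  rw [max_eq_right (by omega), min_eq_left (by omega)] at h
  have hI2 : 4 * I ^ 2 + (2 * K - 1) ^ 2 < 4 * r ^ 2 := by nlinarith
  obtain ⟨d, hd, hdmax⟩ := Int.exists_greatest_of_bdd
    (P := fun d : ℤ => 4 * d ^ 2 + (2 * K - 1) ^ 2 < 4 * r ^ 2)
    ⟨r, fun z hz => by by_contra! hlt; nlinarith [sq_nonneg (2 * K - 1)]⟩ ⟨I, hI2⟩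
  have hId : I ≤ d := hdmax I hI2
  have hdK : d < K := by
    by_contra! hle
    have := mul_self_le_mul_self hK hle
    linarith
  have hdn : 4 * r ^ 2 ≤ 4 * (d + 1) ^ 2 + (2 * K - 1) ^ 2 := by
    by_contra! hlt
    have := hdmax (d + 1) hlt
    omega
  refine ⟨d, hId, fun p h1 h2 => mem_digCircle_of (M := K) (m := d) ?_ ?_ ?_ ?_ ?_⟩
  · rw [h1, h2, max_eq_right hdK.le]
  · rw [h1, h2, min_eq_left hdK.le]
  · omega
  · linarith
  · linarith

/-- Lemma 3 of the paper: projecting a hemisphere absentee onto the zx-plane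
gives a disc absentee. -/
theorem hemi_absentee_proj_disc_absentee (r i j k : ℤ) (hr : 1 ≤ r)
    (h : (i, j, k) ∈ hemiAbs r) : (i, k) ∈ discAbs r := by
  obtain ⟨a, j', ha, -, ⟨hgen, -, -⟩, -, hint, hext⟩ := h
  have har : a ≤ r := le_radius_of_mem (by omega) hgen
  refine ⟨?_, ?_⟩
  · have hsq := sq_le_of_interior hint
    obtain ⟨c, hc, hmem⟩ := exists_mem_digCircle (I := |i|) (K := |k|) hr (abs_nonneg i)
      (abs_nonneg k) (hsq.trans (by nlinarith))
    have hc0 : 0 ≤ c := (abs_nonneg i).trans hc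
    rcases le_total 0 i with hi | hi
    · rw [abs_of_nonneg hi] at hc
      exact ⟨c, hmem _ (abs_of_nonneg hc0) rfl, mul_nonneg hi hc0,
        by show i * c ≤ c ^ 2; nlinarith⟩
    · rw [abs_of_nonpos hi] at hc
      exact ⟨-c, hmem _ (by simp [abs_of_nonneg hc0]) rfl,
        by show 0 ≤ i * -c; nlinarith, by show i * -c ≤ (-c) ^ 2; nlinarith⟩
  · simp only [Set.mem_iUnion, Finset.mem_Icc, not_exists]
    rintro s ⟨hs0, -⟩ hmem
    have hlt := abs_lt.1 (show |circVal s (i, k)| < 1 / 2 from hmem)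
    unfold interiorC at hint
    unfold exteriorC at hext
    rcases le_or_gt a s with hle | hgt
    · have := circVal_anti (by omega) hle (i, k)
      linarith [hlt.1]
    · have := circVal_anti hs0 (show s ≤ a - 1 by omega) (i, k)
      linarith [hlt.2]
end

section
/- Let r' ≥ 1 be an integer and let i, k be integers with 0 ≤ i ≤ k. Then (i,k) ∈ C(r') if and only if r'² − k² − k ≤ i² < r'² − k² + k. -/
/-- Lemma 6 of the paper (interval characterization of Octant-1 circle pixels). -/
theorem circle_pixel_interval (r' i k : ℤ) (hr : 1 ≤ r') (hi : 0 ≤ i) (hik : i ≤ k) :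
    (i, k) ∈ digCircle r' ↔
      r' ^ 2 - k ^ 2 - k ≤ i ^ 2 ∧ i ^ 2 < r' ^ 2 - k ^ 2 + k := by
  have hk : 0 ≤ k := hi.trans hik
  have hmem : (i, k) ∈ digCircle r' ↔
      (k : ℝ) - 1 / 2 < √((r' : ℝ) ^ 2 - (i : ℝ) ^ 2) ∧
        √((r' : ℝ) ^ 2 - (i : ℝ) ^ 2) < (k : ℝ) + 1 / 2 := by
    simp only [digCircle, circVal, Set.mem_setOf_eq, abs_of_nonneg hi, abs_of_nonneg hk,
      max_eq_right hik, min_eq_left hik, abs_lt]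
    constructor <;> rintro ⟨h₁, h₂⟩ <;> constructor <;> linarith
  rw [hmem]
  rcases hk.eq_or_lt with rfl | hkpos
  · -- Here `k - 1/2 < 0`, so squaring is unavailable; both sides fail since `√(r'²) = r' ≥ 1`.
    obtain rfl : i = 0 := le_antisymm hik hi
    have hr' : (1 : ℝ) ≤ r' := by exact_mod_cast hr
    have hs : √((r' : ℝ) ^ 2 - ((0 : ℤ) : ℝ) ^ 2) = r' := by
      rw [Int.cast_zero, zero_pow two_ne_zero, sub_zero, Real.sqrt_sq (by linarith)]
    rw [hs, Int.cast_zero]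
    constructor
    · rintro ⟨-, h⟩
      linarith
    · rintro ⟨h, -⟩
      nlinarith
  · have hk1 : (1 : ℝ) ≤ k := by exact_mod_cast hkpos
    rw [Real.lt_sqrt (by linarith), Real.sqrt_lt' (by linarith)]
    -- Squaring produces `k² ± k + 1/4`; by integrality the `1/4` turns the lower bound on
    -- `r'² - i²` into the strict `k² - k <` and the upper bound into the weak `≤ k² + k`.
    constructor
    · rintro ⟨h₁, h₂⟩
      have h₃ : r' ^ 2 - i ^ 2 < k ^ 2 + k + 1 := by
        have : (r' : ℝ) ^ 2 - (i : ℝ) ^ 2 < (k : ℝ) ^ 2 + k + 1 := by linarith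
        exact_mod_cast this
      have h₄ : k ^ 2 - k < r' ^ 2 - i ^ 2 := by
        have : (k : ℝ) ^ 2 - k < (r' : ℝ) ^ 2 - (i : ℝ) ^ 2 := by linarith
        exact_mod_cast this
      constructor <;> linarith
    · rintro ⟨h₁, h₂⟩
      have h₃ : (r' : ℝ) ^ 2 - (k : ℝ) ^ 2 - k ≤ (i : ℝ) ^ 2 := by exact_mod_cast h₁
      have h₄ : (i : ℝ) ^ 2 + 1 ≤ (r' : ℝ) ^ 2 - (k : ℝ) ^ 2 + k := by
        exact_mod_cast Int.add_one_le_iff.mpr h₂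
      constructor <;> linarith
end

section
/- Let i, k be integers with 0 ≤ i ≤ k. Then (i,k) lies on no digital circle (i.e., (i,k) ∉ C(s) for every integer s ≥ 0) if and only if there exists an integer r' ≥ 1 such that r'² − k² + k ≤ i² < (r'+1)² − k² − k. -/
/-- The squared form of membership. It fails at `k = 0`, where the lower bound
`-1/2 < √(s² - i²)` is vacuous. -/
lemma mem_digCircle_iff (i k s : ℤ) (hi : 0 ≤ i) (hik : i ≤ k) (hk : 1 ≤ k) :
    (i, k) ∈ digCircle s ↔ i ^ 2 + k ^ 2 - k < s ^ 2 ∧ s ^ 2 ≤ i ^ 2 + k ^ 2 + k := by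
  have hkR : (1 : ℝ) ≤ k := by exact_mod_cast hk
  simp only [digCircle, circVal, Set.mem_ofPred_eq, abs_of_nonneg hi,
    abs_of_nonneg (hi.trans hik), max_eq_right hik, min_eq_left hik]
  have h1 : |(k : ℝ) - √((s : ℝ) ^ 2 - (i : ℝ) ^ 2)| < 1 / 2 ↔
      (k : ℝ) - 1 / 2 < √((s : ℝ) ^ 2 - (i : ℝ) ^ 2) ∧
        √((s : ℝ) ^ 2 - (i : ℝ) ^ 2) < k + 1 / 2 := by
    rw [abs_lt]
    constructor <;> rintro ⟨h, h'⟩ <;> constructor <;> linarith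
  rw [h1, Real.lt_sqrt (by linarith), Real.sqrt_lt' (by linarith)]
  -- Multiplying by `4` makes both inequalities integral.
  have h2 : ((k : ℝ) - 1 / 2) ^ 2 < (s : ℝ) ^ 2 - (i : ℝ) ^ 2 ↔
      4 * (i ^ 2 + k ^ 2 - k) + 1 < 4 * s ^ 2 := by
    rw [← Int.cast_lt (R := ℝ)]
    push_cast
    constructor <;> intro h <;> linarith
  have h3 : (s : ℝ) ^ 2 - (i : ℝ) ^ 2 < ((k : ℝ) + 1 / 2) ^ 2 ↔
      4 * s ^ 2 < 4 * (i ^ 2 + k ^ 2 + k) + 1 := by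
    rw [← Int.cast_lt (R := ℝ)]
    push_cast
    constructor <;> intro h <;> linarith
  rw [h2, h3]
  constructor <;> rintro ⟨h, h'⟩ <;> constructor <;> omega

/-- Lemma 7 of the paper (interval characterization of Octant-1 absentee pixels). -/
theorem absentee_pixel_interval (i k : ℤ) (hi : 0 ≤ i) (hik : i ≤ k) :
    (∀ s : ℤ, 0 ≤ s → (i, k) ∉ digCircle s) ↔
      ∃ r' : ℤ, 1 ≤ r' ∧ r' ^ 2 - k ^ 2 + k ≤ i ^ 2 ∧
        i ^ 2 < (r' + 1) ^ 2 - k ^ 2 - k := by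
  rcases (hi.trans hik).eq_or_lt with hk | hk
  · -- For `k = 0` the pixel is the origin, which lies on the circle of radius `0`.
    obtain rfl : k = 0 := hk.symm
    obtain rfl : i = 0 := le_antisymm hik hi
    constructor
    · intro h
      exact absurd (by simp [digCircle, circVal]) (h 0 le_rfl)
    · rintro ⟨r, hr, h, -⟩
      nlinarith
  have hk1 : 1 ≤ k := hk
  simp only [mem_digCircle_iff i k _ hi hik hk1]
  constructor
  · intro h
    have hN : 0 ≤ i ^ 2 + k ^ 2 - k := by nlinarith
    obtain ⟨n, hn⟩ := Int.eq_ofNat_of_zero_le hN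
    have hle : ((Nat.sqrt n : ℕ) : ℤ) ^ 2 ≤ n := by exact_mod_cast Nat.sqrt_le' n
    have hlt : (n : ℤ) < ((Nat.sqrt n : ℕ) + 1 : ℤ) ^ 2 := by
      exact_mod_cast Nat.lt_succ_sqrt' n
    have hgap : i ^ 2 + k ^ 2 + k < ((Nat.sqrt n : ℕ) + 1 : ℤ) ^ 2 := by
      by_contra! hc
      exact h _ (by positivity) ⟨by rw [hn]; exact hlt, hc⟩
    refine ⟨(Nat.sqrt n : ℕ), ?_, by linarith, by linarith⟩
    -- A zero root would give `i² + k² + k < 1`, impossible for `1 ≤ k`.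
    by_contra! hr
    have h0 : ((Nat.sqrt n : ℕ) : ℤ) = 0 := by omega
    rw [h0] at hgap
    nlinarith [sq_nonneg i, sq_nonneg k]
  · rintro ⟨r, hr, hlo, hhi⟩ s hs ⟨h1, h2⟩
    have hrs : r < s := lt_of_pow_lt_pow_left₀ 2 hs (by linarith)
    have hsr : s < r + 1 := lt_of_pow_lt_pow_left₀ 2 (by linarith) (by linarith)
    omega
end

section
/- Let r ≥ 1 be an integer. If (i,j,k) is a hemisphere absentee of H(r) with 0 ≤ i ≤ k (i.e., lying in Octant 1 of its plane), then there exists an integer h ≥ 0 such that (2h+1)·k + h² ≤ i² < (2h+1)·k + (h+1)². In other words, every such absentee lies in one of the half-open parabolic regions P_h = {(x,z) : (2h+1)z + h² ≤ x² < (2h+1)z + (h+1)²}. -/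
theorem circVal_octant {i k : ℤ} (a : ℤ) (hi : 0 ≤ i) (hik : i ≤ k) :
    circVal a (i, k) = (k : ℝ) - Real.sqrt ((a : ℝ) ^ 2 - (i : ℝ) ^ 2) := by
  simp only [circVal, abs_of_nonneg hi, abs_of_nonneg (hi.trans hik), max_eq_right hik,
    min_eq_left hik]

theorem interiorC_octant {a i k : ℤ} (hi : 0 ≤ i) (hik : i ≤ k) (h : interiorC a (i, k)) :
    k ^ 2 + k < a ^ 2 - i ^ 2 := by
  rw [interiorC, circVal_octant a hi hik] at h
  have hk : (0 : ℝ) ≤ k := by exact_mod_cast hi.trans hik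
  have h1 : (k : ℝ) + 1 / 2 ≤ Real.sqrt ((a : ℝ) ^ 2 - (i : ℝ) ^ 2) := by linarith
  rw [Real.le_sqrt' (by linarith)] at h1
  have h2 : (k : ℝ) ^ 2 + k < (a : ℝ) ^ 2 - (i : ℝ) ^ 2 := by nlinarith
  exact_mod_cast h2

theorem exteriorC_octant {a i k : ℤ} (hi : 0 ≤ i) (hik : i ≤ k) (h : exteriorC a (i, k)) :
    a ^ 2 - i ^ 2 ≤ k ^ 2 - k := by
  rw [exteriorC, circVal_octant a hi hik] at h
  have h0 := Real.sqrt_nonneg ((a : ℝ) ^ 2 - (i : ℝ) ^ 2)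
  have h1 : Real.sqrt ((a : ℝ) ^ 2 - (i : ℝ) ^ 2) ≤ (k : ℝ) - 1 / 2 := by linarith
  rw [Real.sqrt_le_left (by linarith)] at h1
  -- The real bound has slack `1 / 4`, which integrality absorbs.
  have h2 : (a : ℝ) ^ 2 - (i : ℝ) ^ 2 < (k : ℝ) ^ 2 - k + 1 := by nlinarith
  have h3 : a ^ 2 - i ^ 2 < k ^ 2 - k + 1 := by exact_mod_cast h2
  omega

/-- Theorem 9 of the paper: every Octant-1 hemisphere absentee lies in one of the
half-open parabolic regions `P_h`. -/
theorem hemi_absentee_parabolic (r i j k : ℤ) (hr : 1 ≤ r) (hi : 0 ≤ i) (hik : i ≤ k)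
    (h : (i, j, k) ∈ hemiAbs r) :
    ∃ h' : ℤ, 0 ≤ h' ∧
      (2 * h' + 1) * k + h' ^ 2 ≤ i ^ 2 ∧ i ^ 2 < (2 * h' + 1) * k + (h' + 1) ^ 2 := by
  obtain ⟨a, j', ha, -, -, -, hint, hext⟩ := h
  have h1 := interiorC_octant hi hik hint
  have h2 := exteriorC_octant hi hik hext
  have hka : k < a := by nlinarith
  exact ⟨a - k - 1, by omega, by nlinarith, by nlinarith⟩
end

section
/- Let a, j be integers with 0 ≤ a ≤ j such that the pixel (a,j) lies on no digital circle (i.e., (a,j) ∉ C(s) for every integer s ≥ 0). Then there exists an integer h ≥ 0 such that (2h+1)·j + h² ≤ a² < (2h+1)·j + (h+1)². Consequently, every real point (x,y,z) with y = j and x² + z² = a² lies in the half-open paraboloidal region {(x,y,z) : (2h+1)y + h² ≤ x² + z² < (2h+1)y + (h+1)²}. -/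
/-- Integer criterion for an octant-1 pixel to lie on a digital circle. -/
lemma mem_digCircle_of_window {a j s : ℤ} (ha : 0 ≤ a) (haj : a ≤ j) (hj : 0 < j)
    (h1 : a ^ 2 + j ^ 2 - j < s ^ 2) (h2 : s ^ 2 ≤ a ^ 2 + j ^ 2 + j) :
    (a, j) ∈ digCircle s := by
  have hj' : (1 : ℝ) ≤ j := by exact_mod_cast hj
  have h1' : (a : ℝ) ^ 2 + j ^ 2 - j + 1 ≤ s ^ 2 := by exact_mod_cast h1
  have h2' : (s : ℝ) ^ 2 ≤ a ^ 2 + j ^ 2 + j := by exact_mod_cast h2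
  have hlow : (j : ℝ) - 1 / 2 < Real.sqrt ((s : ℝ) ^ 2 - (a : ℝ) ^ 2) :=
    Real.lt_sqrt_of_sq_lt (by nlinarith)
  have hup : Real.sqrt ((s : ℝ) ^ 2 - (a : ℝ) ^ 2) < j + 1 / 2 :=
    (Real.sqrt_lt' (by linarith)).2 (by nlinarith)
  simp only [digCircle, circVal, Set.mem_ofPred_eq, abs_of_nonneg ha,
    abs_of_nonneg (ha.trans haj), max_eq_right haj, min_eq_left haj]
  rw [abs_lt]
  constructor <;> linarith

/-- Theorem 12 of the paper (Octant-1 case): every absentee circle lies in a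
half-open paraboloidal region obtained by revolving a parabola about the y-axis. -/
theorem absentee_circle_paraboloid_oct1 (a j : ℤ) (ha : 0 ≤ a) (haj : a ≤ j)
    (h : ∀ s : ℤ, 0 ≤ s → (a, j) ∉ digCircle s) :
    ∃ h' : ℤ, 0 ≤ h' ∧
      (2 * h' + 1) * j + h' ^ 2 ≤ a ^ 2 ∧ a ^ 2 < (2 * h' + 1) * j + (h' + 1) ^ 2 ∧
      ∀ x y z : ℝ, y = (j : ℝ) → x ^ 2 + z ^ 2 = (a : ℝ) ^ 2 →
        (2 * (h' : ℝ) + 1) * y + (h' : ℝ) ^ 2 ≤ x ^ 2 + z ^ 2 ∧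
        x ^ 2 + z ^ 2 < (2 * (h' : ℝ) + 1) * y + ((h' : ℝ) + 1) ^ 2 := by
  -- The origin lies on the circle of radius `0`, so `j = 0` is impossible.
  have hj : 0 < j := by
    by_contra hj
    obtain rfl : j = 0 := by omega
    obtain rfl : a = 0 := by omega
    exact h 0 le_rfl (by simp [digCircle, circVal])
  obtain ⟨k, hk0, hk1, hk2⟩ : ∃ k : ℤ, 0 ≤ k ∧ k ^ 2 ≤ a ^ 2 + j ^ 2 + j ∧
      a ^ 2 + j ^ 2 + j < (k + 1) ^ 2 := by
    obtain ⟨n, hn⟩ := Int.eq_ofNat_of_zero_le (show 0 ≤ a ^ 2 + j ^ 2 + j by positivity)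
    refine ⟨(Nat.sqrt n : ℤ), by positivity, ?_, ?_⟩
    · rw [hn]; exact_mod_cast Nat.sqrt_le' n
    · rw [hn]; exact_mod_cast Nat.lt_succ_sqrt' n
  have hk3 : k ^ 2 ≤ a ^ 2 + j ^ 2 - j := by
    by_contra hc
    exact h k hk0 (mem_digCircle_of_window ha haj hj (not_le.1 hc) hk1)
  have hjk : j ≤ k := by
    by_contra hc
    nlinarith [sq_nonneg a]
  have e1 : (2 * (k - j) + 1) * j + (k - j) ^ 2 ≤ a ^ 2 := by linarith
  have e2 : a ^ 2 < (2 * (k - j) + 1) * j + (k - j + 1) ^ 2 := by linarith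
  refine ⟨k - j, by omega, e1, e2, ?_⟩
  rintro x y z rfl hxz
  rw [hxz]
  exact ⟨by exact_mod_cast e1, by exact_mod_cast e2⟩
end

section
/- Let i, j be integers with 0 ≤ j ≤ i such that the pixel (i,j) lies on no digital circle (i.e., (i,j) ∉ C(s) for every integer s ≥ 0). Then there exists an integer h ≥ 0 such that (2h+1)·i + h² ≤ j² < (2h+1)·i + (h+1)². Consequently, every real point (x,y,z) with y = j and √(x² + z²) = i lies in the half-open paraboloidal region {(x,y,z) : (2h+1)·√(x² + z²) + h² ≤ y² < (2h+1)·√(x² + z²) + (h+1)²}. -/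
/-- Integer criterion for a pixel of the octant `0 ≤ j ≤ i` to lie on a digital circle. -/
lemma mem_digCircle_of_sq_bounds (i j s : ℤ) (hj : 0 ≤ j) (hji : j ≤ i)
    (h1 : i ^ 2 + j ^ 2 - i < s ^ 2) (h2 : s ^ 2 ≤ i ^ 2 + j ^ 2 + i) :
    (i, j) ∈ digCircle s := by
  have hi : 0 ≤ i := hj.trans hji
  have hiR : (0 : ℝ) ≤ i := by exact_mod_cast hi
  -- Integrality gains the `1` that absorbs the `1 / 4` in `(i - 1 / 2) ^ 2`.
  have h1R : (i : ℝ) ^ 2 + j ^ 2 - i + 1 ≤ s ^ 2 := by exact_mod_cast Int.add_one_le_of_lt h1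
  have h2R : (s : ℝ) ^ 2 ≤ i ^ 2 + j ^ 2 + i := by exact_mod_cast h2
  have hlo : (i : ℝ) - 1 / 2 < Real.sqrt ((s : ℝ) ^ 2 - (j : ℝ) ^ 2) :=
    Real.lt_sqrt_of_sq_lt (by linarith)
  have hhi : Real.sqrt ((s : ℝ) ^ 2 - (j : ℝ) ^ 2) < (i : ℝ) + 1 / 2 :=
    (Real.sqrt_lt' (by linarith)).2 (by linarith)
  simp only [digCircle, circVal, Set.mem_ofPred_eq, abs_of_nonneg hi, abs_of_nonneg hj,
    max_eq_left hji, min_eq_right hji]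
  rw [abs_lt]
  constructor <;> linarith

/-- Theorem 13 of the paper (Octant-2 case): every absentee circle lies in a
half-open paraboloidal region obtained by revolving a parabola about the y-axis. -/
theorem absentee_circle_paraboloid_oct2 (i j : ℤ) (hj : 0 ≤ j) (hji : j ≤ i)
    (h : ∀ s : ℤ, 0 ≤ s → (i, j) ∉ digCircle s) :
    ∃ h' : ℤ, 0 ≤ h' ∧
      (2 * h' + 1) * i + h' ^ 2 ≤ j ^ 2 ∧ j ^ 2 < (2 * h' + 1) * i + (h' + 1) ^ 2 ∧
      ∀ x y z : ℝ, y = (j : ℝ) → Real.sqrt (x ^ 2 + z ^ 2) = (i : ℝ) →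
        (2 * (h' : ℝ) + 1) * Real.sqrt (x ^ 2 + z ^ 2) + (h' : ℝ) ^ 2 ≤ y ^ 2 ∧
        y ^ 2 < (2 * (h' : ℝ) + 1) * Real.sqrt (x ^ 2 + z ^ 2) + ((h' : ℝ) + 1) ^ 2 := by
  have hi : 0 ≤ i := hj.trans hji
  obtain ⟨s, hs0, hs1, hs2⟩ : ∃ s : ℤ, 0 ≤ s ∧ s ^ 2 ≤ i ^ 2 + j ^ 2 + i ∧
      i ^ 2 + j ^ 2 + i < (s + 1) ^ 2 := by
    obtain ⟨n, hn⟩ := Int.eq_ofNat_of_zero_le (show 0 ≤ i ^ 2 + j ^ 2 + i by positivity)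
    refine ⟨(Nat.sqrt n : ℤ), by positivity, ?_, ?_⟩
    · rw [hn]; exact_mod_cast Nat.sqrt_le' n
    · rw [hn]; exact_mod_cast Nat.lt_succ_sqrt' n
  have hs3 : s ^ 2 ≤ i ^ 2 + j ^ 2 - i := by
    by_contra! hc
    exact h s hs0 (mem_digCircle_of_sq_bounds i j s hj hji hc hs1)
  have his : i ≤ s := by
    have hlt : i < s + 1 := lt_of_pow_lt_pow_left₀ 2 (by linarith) (by nlinarith [sq_nonneg j])
    linarith
  have hA : (2 * (s - i) + 1) * i + (s - i) ^ 2 ≤ j ^ 2 := by linarith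
  have hB : j ^ 2 < (2 * (s - i) + 1) * i + (s - i + 1) ^ 2 := by linarith
  refine ⟨s - i, by linarith, hA, hB, ?_⟩
  intro x y z hy hxz
  rw [hxz, hy]
  exact ⟨by exact_mod_cast hA, by exact_mod_cast hB⟩
end

section
/- For an integer ρ ≥ 1, let A'(ρ) = {(i,k) ∈ ℤ² : 0 ≤ i ≤ k and ρ² − k² + k ≤ i² < (ρ+1)² − k² − k} be the set of Octant-1 disc absentees lying between the digital circles C(ρ) and C(ρ+1). Then |A'(ρ)| = Θ(ρ): there exist constants c₁ > 0, c₂ > 0 and an integer ρ₀ such that for every integer ρ ≥ ρ₀, c₁·ρ ≤ |A'(ρ)| ≤ c₂·ρ. -/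
/-!
Upper bound: the map `(i, k) ↦ i` is injective on the absentees, because two absentees
`(i, k)`, `(i, k')` with `k < k'` would give `(k + k') (k' - k + 1) < 2 ρ + 1`, hence `2 k < ρ`,
whereas `i ≤ k` forces `2 k ^ 2 ≥ ρ ^ 2`. Its values lie in `[0, ρ]`.

Lower bound: the map `(i, k) ↦ i + k` attains every integer `j` with `1.402 ρ ≤ j ≤ 1.41 ρ`.
Walk along the antidiagonal `i + k = j` from the diagonal `i = k` towards larger `k`. The quantity
`i ^ 2 + k ^ 2 - k` starts below `ρ ^ 2` (as `j < √2 ρ`) and grows by about `2 (k - i)` per step,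
while the window defining an absentee has width `2 ρ + 1 - 2 k`. So the window cannot be
jumped over as long as `2 k - i ≤ ρ + 2`, that is `3 k ≤ ρ + j + 2`; and at the end of this range,
near `(0.6 ρ, 0.8 ρ)`, the quantity has already reached `ρ ^ 2`.
-/

/-- The Octant-1 disc absentees lying between the digital circles `C(ρ)` and `C(ρ+1)`. -/
def octAbsBetween (ρ : ℤ) : Set (ℤ × ℤ) :=
  {p | 0 ≤ p.1 ∧ p.1 ≤ p.2 ∧
    ρ ^ 2 - p.2 ^ 2 + p.2 ≤ p.1 ^ 2 ∧ p.1 ^ 2 < (ρ + 1) ^ 2 - p.2 ^ 2 - p.2}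

/-- For a fixed abscissa, no absentee lies above another one. -/
lemma octAbsBetween_not_lt {ρ i k k' : ℤ} (hρ : 0 ≤ ρ) (h : (i, k) ∈ octAbsBetween ρ)
    (h' : (i, k') ∈ octAbsBetween ρ) : ¬ k < k' := by
  intro hlt
  obtain ⟨h0, hik, h1, -⟩ := h
  obtain ⟨-, -, -, h2⟩ := h'
  simp only at h0 hik h1 h2
  have h3 : (k + k') * (k' - k + 1) < 2 * ρ + 1 := by nlinarith
  have h4 : 2 * k < ρ := by nlinarith
  nlinarith

lemma octAbsBetween_injOn_fst {ρ : ℤ} (hρ : 0 ≤ ρ) :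
    Set.InjOn Prod.fst (octAbsBetween ρ) := by
  rintro ⟨i, k⟩ h ⟨i', k'⟩ h' (rfl : i = i')
  have a := octAbsBetween_not_lt hρ h h'
  have b := octAbsBetween_not_lt hρ h' h
  rw [show k = k' by omega]

lemma octAbsBetween_mapsTo_fst {ρ : ℤ} (hρ : 0 ≤ ρ) :
    Set.MapsTo Prod.fst (octAbsBetween ρ) (Set.Icc 0 ρ) := by
  rintro ⟨i, k⟩ ⟨h0, hik, -, h2⟩
  simp only at h0 hik h2
  refine ⟨h0, ?_⟩
  by_contra! hlt
  simp only at hlt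
  nlinarith

/-- Every antidiagonal `i + k = j` with `1.402 ρ ≤ j ≤ 1.41 ρ` contains an absentee. -/
lemma exists_octAbsBetween_add_eq {ρ j : ℤ} (hρ : 10000 ≤ ρ) (h1 : 1402 * ρ ≤ 1000 * j)
    (h2 : 1000 * j ≤ 1410 * ρ) : ∃ p ∈ octAbsBetween ρ, p.1 + p.2 = j := by
  -- The last point of the antidiagonal with `2 * k - i ≤ ρ + 2`.
  obtain ⟨k₁, u, hk₁, hu0, hu2⟩ : ∃ k₁ u : ℤ, 3 * k₁ = ρ + j + u ∧ 0 ≤ u ∧ u ≤ 2 :=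
    ⟨(ρ + j + 2) / 3, 3 * ((ρ + j + 2) / 3) - (ρ + j), by omega, by omega, by omega⟩
  have hend : ρ ^ 2 ≤ (j - k₁) ^ 2 + k₁ ^ 2 - k₁ := by
    have e : 9 * ((j - k₁) ^ 2 + k₁ ^ 2 - k₁)
        = 5 * j ^ 2 - 2 * ρ * j + 2 * ρ ^ 2 + u * (4 * ρ - 2 * j) + 2 * u ^ 2
          - 3 * (ρ + j + u) := by
      obtain rfl : u = 3 * k₁ - ρ - j := by linarith
      ring
    have hu : 0 ≤ u * (4 * ρ - 2 * j) := mul_nonneg hu0 (by linarith)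
    -- `5 x² - 2 x + 2 - 9` vanishes at `x = 1.4`; here `x = j / ρ ≥ 1.402`.
    have hq : 9 * ρ ^ 2 + 20 * ρ ≤ 5 * j ^ 2 - 2 * ρ * j + 2 * ρ ^ 2 := by
      have f : 5 * j ^ 2 - 2 * ρ * j + 2 * ρ ^ 2 - 9 * ρ ^ 2 = (5 * j - 7 * ρ) * (j + ρ) := by
        ring
      have g : 100 ≤ 5 * j - 7 * ρ := by linarith
      nlinarith
    nlinarith [sq_nonneg u]
  have hstart : ∀ k : ℤ, 2 * k ≤ j + 1 → j ≤ 2 * k → (j - k) ^ 2 + k ^ 2 - k < ρ ^ 2 := by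
    intro k ha hb
    have e : 2 * ((j - k) ^ 2 + k ^ 2) = j ^ 2 + (2 * k - j) ^ 2 := by ring
    have f : (2 * k - j) ^ 2 ≤ 1 := by nlinarith
    nlinarith
  -- The first point past the diagonal at which the lower inequality holds.
  obtain ⟨k, ⟨hkj, hk⟩, hmin⟩ := Int.exists_least_of_bdd
    (P := fun k => j ≤ 2 * k ∧ ρ ^ 2 ≤ (j - k) ^ 2 + k ^ 2 - k)
    ⟨0, fun z hz => by have := hz.1; omega⟩ ⟨k₁, by omega, hend⟩
  have hkk₁ : k ≤ k₁ := hmin k₁ ⟨by omega, hend⟩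
  have hpred : (j - (k - 1)) ^ 2 + (k - 1) ^ 2 - (k - 1) < ρ ^ 2 := by
    by_contra! hcon
    rcases le_or_gt j (2 * (k - 1)) with h | h
    · have := hmin (k - 1) ⟨h, hcon⟩
      omega
    · exact absurd hk (not_le.mpr (hstart k (by omega) hkj))
  refine ⟨(j - k, k), ⟨?_, ?_, ?_, ?_⟩, ?_⟩ <;> simp only
  · omega
  · omega
  · linarith
  · nlinarith
  · ring

/-- The count of Octant-1 disc absentees between two consecutive circles is `Θ(ρ)`. -/
theorem octant_absentee_between_linear :
    ∃ c₁ c₂ : ℝ, 0 < c₁ ∧ 0 < c₂ ∧ ∃ ρ₀ : ℤ, ∀ ρ : ℤ, ρ₀ ≤ ρ →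
      c₁ * (ρ : ℝ) ≤ ((octAbsBetween ρ).ncard : ℝ) ∧
      ((octAbsBetween ρ).ncard : ℝ) ≤ c₂ * (ρ : ℝ) := by
  refine ⟨1 / 1000, 2, by norm_num, by norm_num, 10000, fun ρ hρ => ?_⟩
  have hρ0 : 0 ≤ ρ := by omega
  have hfin : (octAbsBetween ρ).Finite :=
    Set.Finite.of_injOn (octAbsBetween_mapsTo_fst hρ0) (octAbsBetween_injOn_fst hρ0)
      (Set.finite_Icc 0 ρ)
  have card_Icc : ∀ a b : ℤ, (Set.Icc a b).ncard = (b + 1 - a).toNat := fun a b => by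
    rw [← Finset.coe_Icc, Set.ncard_coe_finset, Int.card_Icc]
  constructor
  · have hsub : Set.Icc (1402 * ρ / 1000 + 1) (1410 * ρ / 1000) ⊆
        (fun p : ℤ × ℤ => p.1 + p.2) '' octAbsBetween ρ := by
      rintro j ⟨ha, hb⟩
      exact exists_octAbsBetween_add_eq hρ (by omega) (by omega)
    have h := (Set.ncard_le_ncard hsub (hfin.image _)).trans (Set.ncard_image_le hfin)
    rw [card_Icc] at h
    have h' : ρ ≤ 1000 * ((octAbsBetween ρ).ncard : ℤ) := by omega
    have h'' : (ρ : ℝ) ≤ 1000 * ((octAbsBetween ρ).ncard : ℝ) := by exact_mod_cast h'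
    linarith
  · have h := Set.ncard_le_ncard_of_injOn Prod.fst (octAbsBetween_mapsTo_fst hρ0)
      (octAbsBetween_injOn_fst hρ0) (Set.finite_Icc 0 ρ)
    rw [card_Icc] at h
    have h' : ((octAbsBetween ρ).ncard : ℤ) ≤ 2 * ρ := by omega
    exact_mod_cast h'
end
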